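/- Let u = x_{k_1} x_{k_2} ⋯ x_{k_d} be a minimal monomial generator of I(K_V^t) with k_j ∈ V_j, and let i_1 = min V_1. Then set(u) = {ℓ : x_ℓ ∈ (v ∈ G(I(K_V^t)) : v >_lex u) : (u)} equals the union of [i_1, k_1 − 1] ∩ V_1 and the sets [k_{j-1} + t_{j-1}, k_j − 1] ∩ V_j for j = 2, ..., d. -/

import Mathlib

/-!
The colon ideal is monomial: `x_ℓ` lies in it iff some generator `v >_lex u` divides `x_ℓ u`.
Since the `V_j` are pairwise disjoint, such a `v` arises from `u` by exchanging exactly one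
vertex `e j` for `ℓ ∈ V_j` (`eq_update_of_expOf_le`), and then `v >_lex u` means precisely
`ℓ < e j` (`expOf_lt_update_iff`). The spread condition on `v` at the positions `j - 1, j` is the
lower bound on `ℓ`. Conversely, lowering `e j` to such an `ℓ` can only enlarge the gap to
`e (j + 1)`, so the exchanged set is again an edge (`IsSpreadEdge.update`).
-/

open MvPolynomial

/-- `e : Fin d → Fin n` encodes a `𝐭`-spread edge. -/
def IsSpreadEdge (n d : ℕ) (V : Fin d → Finset (Fin n)) (t : ℕ → ℕ) (e : Fin d → Fin n) :
    Prop :=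
  (∀ j, e j ∈ V j) ∧
    ∀ (j : ℕ) (h : j + 1 < d),
      (e ⟨j, Nat.lt_of_succ_lt h⟩ : ℕ) + t j ≤ (e ⟨j + 1, h⟩ : ℕ)

/-- Exponent vector of the squarefree monomial attached to an edge `e`; comparing these in
`Finsupp.Lex` is the lex order on monomials induced by `x_1 > ⋯ > x_n`. -/
noncomputable def expOf {n d : ℕ} (e : Fin d → Fin n) : Fin n →₀ ℕ :=
  ∑ j, Finsupp.single (e j) 1

theorem prod_X_eq_monomial_expOf {K : Type} [Field K] {n d : ℕ} (e : Fin d → Fin n) :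
    (∏ j, X (e j) : MvPolynomial (Fin n) K) = monomial (expOf e) 1 := by
  rw [expOf, monomial_sum_one]
  rfl

theorem expOf_pos_iff {n d : ℕ} (e : Fin d → Fin n) (m : Fin n) :
    0 < expOf e m ↔ ∃ j, e j = m := by
  simp [expOf, Finsupp.finsetSum_apply, Nat.pos_iff_ne_zero, Finsupp.single_apply]

theorem expOf_update {n d : ℕ} (e : Fin d → Fin n) (j : Fin d) (l : Fin n) :
    expOf (Function.update e j l) + Finsupp.single (e j) 1 = expOf e + Finsupp.single l 1 := by
  unfold expOf
  rw [← Finset.add_sum_erase _ _ (Finset.mem_univ j),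
    ← Finset.add_sum_erase _ (fun i => Finsupp.single (e i) 1) (Finset.mem_univ j),
    Finset.sum_congr rfl (g := fun i => Finsupp.single (e i) 1)
      (fun i hi => by rw [Function.update_of_ne (Finset.ne_of_mem_erase hi)]),
    Function.update_self]
  abel

/-- Exchanging a vertex `e j` for `l` makes the monomial lex-larger exactly when `l` is smaller:
the common factor cancels, leaving the comparison of two variables. -/
theorem expOf_lt_update_iff {n d : ℕ} (e : Fin d → Fin n) (j : Fin d) (l : Fin n) :
    toLex (expOf e) < toLex (expOf (Function.update e j l)) ↔ l < e j := by
  rw [← Finsupp.Lex.single_lt_iff (α := Fin n),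
    ← add_lt_add_iff_right (a := toLex (Finsupp.single (e j) 1)),
    ← toLex_add (expOf (Function.update e j l)),
    expOf_update, toLex_add, add_lt_add_iff_left]

/-- The blocks of the partition are pairwise disjoint. -/
theorem index_unique {n d : ℕ} {V : Fin d → Finset (Fin n)}
    (hV : ∀ i j : Fin d, i < j → ∀ p ∈ V i, ∀ q ∈ V j, (p : ℕ) < (q : ℕ))
    {i j : Fin d} {p : Fin n} (hi : p ∈ V i) (hj : p ∈ V j) : i = j := by
  rcases lt_trichotomy i j with h | h | h
  · exact absurd (hV i j h p hi p hj) (lt_irrefl _)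
  · exact h
  · exact absurd (hV j i h p hj p hi) (lt_irrefl _)

/-- If the monomial of the transversal `e'` divides `x_l` times the one of `e`, then `e'` is `e`
with one vertex exchanged for `l`. -/
theorem eq_update_of_expOf_le {n d : ℕ} {V : Fin d → Finset (Fin n)}
    (hV : ∀ i j : Fin d, i < j → ∀ p ∈ V i, ∀ q ∈ V j, (p : ℕ) < (q : ℕ))
    {e e' : Fin d → Fin n} (he : ∀ j, e j ∈ V j) (he' : ∀ j, e' j ∈ V j) (hne : e ≠ e')
    {l : Fin n} (hle : expOf e' ≤ Finsupp.single l 1 + expOf e) :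
    ∃ j, l ∈ V j ∧ e' = Function.update e j l := by
  have key : ∀ i, e' i = e i ∨ e' i = l := by
    intro i
    have h1 : 0 < expOf e' (e' i) := (expOf_pos_iff _ _).2 ⟨i, rfl⟩
    have h2 := hle (e' i)
    rw [Finsupp.add_apply, Finsupp.single_apply] at h2
    split_ifs at h2 with h
    · exact Or.inr h.symm
    · obtain ⟨k, hk⟩ := (expOf_pos_iff e (e' i)).1 (by omega)
      have hki : k = i := index_unique hV (he k) (hk ▸ he' i)
      exact Or.inl (hki ▸ hk.symm)
  obtain ⟨j, hj⟩ := Function.ne_iff.1 hne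
  have hjl : e' j = l := (key j).resolve_left (Ne.symm hj)
  refine ⟨j, hjl ▸ he' j, funext fun i => ?_⟩
  by_cases hij : i = j
  · subst hij
    simpa using hjl
  · rw [Function.update_of_ne hij]
    refine (key i).resolve_right fun hil => hij ?_
    exact index_unique hV (he' i) (by rw [hil, ← hjl]; exact he' j)

/-- Lowering the vertex `e j` to some `l ∈ V_j` that respects the gap to the preceding vertex
gives an edge again. -/
theorem IsSpreadEdge.update {n d : ℕ} {V : Fin d → Finset (Fin n)} {t : ℕ → ℕ}
    {e : Fin d → Fin n} (he : IsSpreadEdge n d V t e) (j : Fin d) {l : Fin n} (hl : l ∈ V j)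
    (hlt : l < e j)
    (hgap : ∀ (i : ℕ) (h : i + 1 < d), j = ⟨i + 1, h⟩ →
      (e ⟨i, Nat.lt_of_succ_lt h⟩ : ℕ) + t i ≤ (l : ℕ)) :
    IsSpreadEdge n d V t (Function.update e j l) := by
  refine ⟨fun i => ?_, fun i h => ?_⟩
  · by_cases hij : i = j
    · subst hij
      simpa using hl
    · rw [Function.update_of_ne hij]
      exact he.1 i
  · have hgi := he.2 i h
    have hlt' : (l : ℕ) < (e j : ℕ) := hlt
    by_cases h1 : j = ⟨i + 1, h⟩
    · have h2 : (⟨i, Nat.lt_of_succ_lt h⟩ : Fin d) ≠ j := by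
        rw [h1]; simp
      rw [Function.update_of_ne h2, ← h1, Function.update_self]
      exact hgap i h h1
    · rw [Function.update_of_ne (Ne.symm h1)]
      by_cases h2 : (⟨i, Nat.lt_of_succ_lt h⟩ : Fin d) = j
      · rw [h2, Function.update_self]
        rw [h2] at hgi
        omega
      · rw [Function.update_of_ne h2]
        exact hgi

/-- The colon ideal is monomial: membership of `x_l` is divisibility of `x_l u` by a generator. -/
theorem X_mem_colon_iff {K : Type} [Field K] {n d : ℕ} (P : (Fin d → Fin n) → Prop)
    (e : Fin d → Fin n) (l : Fin n) :
    (X l : MvPolynomial (Fin n) K) ∈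
        Submodule.colon
          (Ideal.span {m : MvPolynomial (Fin n) K |
            ∃ e' : Fin d → Fin n, P e' ∧
              toLex (expOf e) < toLex (expOf e') ∧ m = ∏ j, X (e' j)})
          (Ideal.span {(∏ j, X (e j) : MvPolynomial (Fin n) K)}) ↔
      ∃ e', P e' ∧ toLex (expOf e) < toLex (expOf e') ∧
        expOf e' ≤ Finsupp.single l 1 + expOf e := by
  have hset : {m : MvPolynomial (Fin n) K | ∃ e' : Fin d → Fin n, P e' ∧
      toLex (expOf e) < toLex (expOf e') ∧ m = ∏ j, X (e' j)} =
      (fun s => monomial s (1 : K)) ''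
        {s | ∃ e' : Fin d → Fin n, P e' ∧ toLex (expOf e) < toLex (expOf e') ∧ s = expOf e'} := by
    ext m
    constructor
    · rintro ⟨e', h1, h2, rfl⟩
      exact ⟨_, ⟨e', h1, h2, rfl⟩, (prod_X_eq_monomial_expOf e').symm⟩
    · rintro ⟨_, ⟨e', h1, h2, rfl⟩, rfl⟩
      exact ⟨e', h1, h2, (prod_X_eq_monomial_expOf e').symm⟩
  have hmul : (X l : MvPolynomial (Fin n) K) * ∏ j, X (e j) =
      monomial (Finsupp.single l 1 + expOf e) 1 := by
    rw [prod_X_eq_monomial_expOf, X, monomial_mul, one_mul]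
  rw [Ideal.mem_colon_span_singleton, hmul, hset, mem_ideal_span_monomial_image]
  constructor
  · intro h
    obtain ⟨_, ⟨e', h1, h2, rfl⟩, h3⟩ := h (Finsupp.single l 1 + expOf e) (by simp)
    exact ⟨e', h1, h2, h3⟩
  · rintro ⟨e', h1, h2, h3⟩ m hm
    have hm := Finset.mem_singleton.1 (support_monomial_subset hm)
    exact ⟨_, ⟨e', h1, h2, rfl⟩, hm ▸ h3⟩

/-- **Proposition (description of `set(u)`).** For a minimal generator
`u = x_{k_1} ⋯ x_{k_d}` (encoded by the edge `e`) of `I(K_V^𝐭)`, the set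
`set(u) = {ℓ : x_ℓ ∈ (v ∈ G(I) : v >_lex u) : (u)}` equals the union of
`[i_1, k_1 - 1] ∩ V_1` (where `i_1 = min V_1`) and `[k_{j-1} + t_{j-1}, k_j - 1] ∩ V_j`
for `j = 2, …, d`. -/
theorem set_of_generator_description
    (K : Type) [Field K] (n d : ℕ) (hd : 0 < d)
    (V : Fin d → Finset (Fin n)) (t : ℕ → ℕ)
    (ht : ∀ i, 1 ≤ t i)
    (hV : ∀ i j : Fin d, i < j → ∀ p ∈ V i, ∀ q ∈ V j, (p : ℕ) < (q : ℕ))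
    (hne : ∀ j, (V j).Nonempty)
    (hiso : ∀ (j : Fin d), ∀ v ∈ V j, ∃ e, IsSpreadEdge n d V t e ∧ e j = v)
    (e : Fin d → Fin n) (he : IsSpreadEdge n d V t e) :
    {ℓ : Fin n | (X ℓ : MvPolynomial (Fin n) K) ∈
        Submodule.colon
          (Ideal.span {m : MvPolynomial (Fin n) K |
            ∃ e' : Fin d → Fin n, IsSpreadEdge n d V t e' ∧
              toLex (expOf e) < toLex (expOf e') ∧ m = ∏ j, X (e' j)})
          (Ideal.span {(∏ j, X (e j) : MvPolynomial (Fin n) K)})} =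
      {ℓ : Fin n |
        (ℓ ∈ V ⟨0, hd⟩ ∧ ((V ⟨0, hd⟩).min' (hne ⟨0, hd⟩) : ℕ) ≤ (ℓ : ℕ) ∧
          (ℓ : ℕ) < (e ⟨0, hd⟩ : ℕ)) ∨
        (∃ (j : ℕ) (h : j + 1 < d), ℓ ∈ V ⟨j + 1, h⟩ ∧
          (e ⟨j, Nat.lt_of_succ_lt h⟩ : ℕ) + t j ≤ (ℓ : ℕ) ∧
          (ℓ : ℕ) < (e ⟨j + 1, h⟩ : ℕ))} := by
  ext l
  rw [Set.mem_ofPred_eq, Set.mem_ofPred_eq, X_mem_colon_iff (IsSpreadEdge n d V t)]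
  constructor
  · rintro ⟨e', he', hlex, hle⟩
    obtain ⟨j, hl, rfl⟩ := eq_update_of_expOf_le hV he.1 he'.1
      (by rintro rfl; exact lt_irrefl _ hlex) hle
    have hlt : l < e j := (expOf_lt_update_iff e j l).1 hlex
    obtain ⟨j, hj⟩ := j
    cases j with
    | zero => exact Or.inl ⟨hl, Fin.le_def.1 (Finset.min'_le _ _ hl), hlt⟩
    | succ j =>
      refine Or.inr ⟨j, hj, hl, ?_, hlt⟩
      have h := he'.2 j hj
      rwa [Function.update_self, Function.update_of_ne (by simp)] at h
  ·
    -- In both cases the witness is `e` with its `j`-th vertex exchanged for `l`.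
    have main : ∀ j, l ∈ V j → l < e j → (∀ (i : ℕ) (h : i + 1 < d), j = ⟨i + 1, h⟩ →
        (e ⟨i, Nat.lt_of_succ_lt h⟩ : ℕ) + t i ≤ (l : ℕ)) →
        ∃ e', IsSpreadEdge n d V t e' ∧ toLex (expOf e) < toLex (expOf e') ∧
          expOf e' ≤ Finsupp.single l 1 + expOf e := by
      intro j hl hlt hgap
      refine ⟨_, he.update j hl hlt hgap, (expOf_lt_update_iff e j l).2 hlt, ?_⟩
      rw [add_comm, ← expOf_update e j l]
      exact le_self_add
    rintro (⟨hl, -, hlt⟩ | ⟨j, hj, hl, hgap, hlt⟩)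
    · exact main _ hl hlt (by intro i h h0; simp at h0)
    · refine main _ hl hlt ?_
      intro i h h0
      obtain rfl : j = i := by simpa using h0
      exact hgap
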